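/- arXiv:1503.07372 — 8 statements merged into one kernel-verified Lean document; each statement's English description precedes it below -/
import Mathlib

section
/- For all nonnegative real numbers S, I, C with C ≥ I, one has log₂(1 + C + I + S/(1+I)) + log₂(1 + I + S(1+C)/(1+C+I)) ≥ log₂(1 + S/(1+I)) + log₂(1 + (√S + √I)²) − 2. -/
/-!
The two logarithms are compared separately. The first one on the left already dominates the first
one on the right. In the second, `I ≤ C` makes the factor `(1 + C) / (1 + C + I)` at least
`1 / 2`, while `(√S + √I) ^ 2 ≤ 2 * (S + I)`; together these cost at most a factor of `4` inside the
logarithm, which is the gap of `2` bits.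
-/

theorem half_le_mul_div_add {K : Type*} [Field K] [LinearOrder K] [IsStrictOrderedRing K]
    {s a b : K} (hs : 0 ≤ s) (hab : 0 < a + b) (hba : b ≤ a) : s / 2 ≤ s * a / (a + b) := by
  have half_le_share : 1 / 2 ≤ a / (a + b) := by
    rw [div_le_div_iff₀ two_pos hab]
    linarith
  calc s / 2 = s * (1 / 2) := by ring
    _ ≤ s * (a / (a + b)) := mul_le_mul_of_nonneg_left half_le_share hs
    _ = s * a / (a + b) := by ring

theorem sq_sqrt_add_sqrt_le {x y : ℝ} (hx : 0 ≤ x) (hy : 0 ≤ y) :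
    (√x + √y) ^ 2 ≤ 2 * (x + y) := by
  simpa only [Real.sq_sqrt hx, Real.sq_sqrt hy] using add_sq_le (a := √x) (b := √y)

theorem one_add_sq_sqrt_add_sqrt_le {s i a : ℝ} (hs : 0 ≤ s) (hi : 0 ≤ i) (hai : 0 < a + i)
    (hia : i ≤ a) : 1 + (√s + √i) ^ 2 ≤ 4 * (1 + i + s * a / (a + i)) :=
  calc 1 + (√s + √i) ^ 2 ≤ 1 + 2 * (s + i) := by linarith [sq_sqrt_add_sqrt_le hs hi]
    _ ≤ 4 * (1 + i + s / 2) := by linarith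
    _ ≤ 4 * (1 + i + s * a / (a + i)) := by linarith [half_le_mul_div_add hs hai hia]

theorem logb_le_logb_add_of_le_rpow_mul {b x y k : ℝ} (hb : 1 < b) (hx : 0 < x)
    (hxy : x ≤ b ^ k * y) : Real.logb b x ≤ Real.logb b y + k := by
  have hb₀ : 0 < b := one_pos.trans hb
  have hbk : 0 < b ^ k := Real.rpow_pos_of_pos hb₀ k
  have hy : 0 < y := pos_of_mul_pos_right (hx.trans_le hxy) hbk.le
  calc Real.logb b x ≤ Real.logb b (b ^ k * y) := Real.logb_le_logb_of_le hb hx hxy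
    _ = Real.logb b y + k := by
      rw [Real.logb_mul hbk.ne' hy.ne', Real.logb_rpow hb₀ hb.ne', add_comm]

theorem stmt_6 (S I C : ℝ) (hS : 0 ≤ S) (hI : 0 ≤ I) (hC : 0 ≤ C) (hCI : C ≥ I) :
    Real.logb 2 (1 + C + I + S / (1 + I)) + Real.logb 2 (1 + I + S * (1 + C) / (1 + C + I))
      ≥ Real.logb 2 (1 + S / (1 + I)) + Real.logb 2 (1 + (Real.sqrt S + Real.sqrt I) ^ 2) - 2 := by
  have first_le : Real.logb 2 (1 + S / (1 + I)) ≤ Real.logb 2 (1 + C + I + S / (1 + I)) :=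
    Real.logb_le_logb_of_le one_lt_two (by positivity) (by linarith)
  have arg_le : 1 + (√S + √I) ^ 2 ≤ (2 : ℝ) ^ (2 : ℝ) * (1 + I + S * (1 + C) / (1 + C + I)) := by
    have four_eq : (2 : ℝ) ^ (2 : ℝ) = 4 := by norm_num
    rw [four_eq]
    exact one_add_sq_sqrt_add_sqrt_le hS hI (by positivity) (by linarith)
  have second_le : Real.logb 2 (1 + (√S + √I) ^ 2)
      ≤ Real.logb 2 (1 + I + S * (1 + C) / (1 + C + I)) + 2 :=
    logb_le_logb_add_of_le_rpow_mul one_lt_two (by positivity) arg_le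
  linarith
end

section
/- For all nonnegative real numbers S, I, C with C ≥ I, one has log₂(1 + C/(1+I+S)) + log₂(1 + I + S(1+C)/(1+I+C)) ≥ log₂(1 + I + S/2). -/
theorem one_half_le_div_add {𝕜 : Type*} [Field 𝕜] [LinearOrder 𝕜] [IsStrictOrderedRing 𝕜]
    {x y : 𝕜} (hxy : x ≤ y) (hpos : 0 < x + y) : 1 / 2 ≤ y / (x + y) := by
  rw [div_le_div_iff₀ two_pos hpos]
  linarith

theorem stmt_7_general {b S I C : ℝ} (hb : 1 < b) (hS : 0 ≤ S) (hI : 0 ≤ I) (hC : 0 ≤ C)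
    (hIC : I ≤ 1 + C) :
    Real.logb b (1 + I + S / 2)
      ≤ Real.logb b (1 + C / (1 + I + S)) + Real.logb b (1 + I + S * (1 + C) / (1 + I + C)) := by
  have first_nonneg : 0 ≤ Real.logb b (1 + C / (1 + I + S)) :=
    Real.logb_nonneg hb (le_add_of_nonneg_right (by positivity))
  have half_le_gain : S / 2 ≤ S * (1 + C) / (1 + I + C) := calc
    S / 2 = S * (1 / 2) := by ring
    _ ≤ S * ((1 + C) / (I + (1 + C))) :=
      mul_le_mul_of_nonneg_left (one_half_le_div_add hIC (by positivity)) hS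
    _ = S * (1 + C) / (1 + I + C) := by ring
  have le_second : Real.logb b (1 + I + S / 2)
      ≤ Real.logb b (1 + I + S * (1 + C) / (1 + I + C)) :=
    Real.logb_le_logb_of_le hb (by positivity) (by gcongr)
  exact le_add_of_nonneg_of_le first_nonneg le_second

theorem stmt_7 (S I C : ℝ) (hS : 0 ≤ S) (hI : 0 ≤ I) (hC : 0 ≤ C) (hCI : C ≥ I) :
    Real.logb 2 (1 + C / (1 + I + S)) + Real.logb 2 (1 + I + S * (1 + C) / (1 + I + C))
      ≥ Real.logb 2 (1 + I + S / 2) :=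
  stmt_7_general one_lt_two hS hI hC (by linarith)
end

section
/- For all nonnegative real numbers S, I, C with I ≤ S and C ≤ I(1+I)/(1+S), one has log₂(1 + C + I + S/(1+I)) + log₂(1 + I + S(1+C)/(1+C+I)) ≤ 2·log₂(1 + I + S/(1+I)) + 2. -/
/-!
In the very weak cooperation regime, `C ≤ I` and `S * C ≤ I * (1 + C + I)`. The first inequality
bounds the contribution of `C` to the argument of the first logarithm by `I`; the second bounds
the cooperative part `S * C / (1 + C + I)` of the second argument by `I`. Hence each argument is at
most twice the non-cooperative one, `1 + I + S / (1 + I)`, which costs one bit per logarithm.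
-/

section Gains

variable {K : Type*} [Field K] [LinearOrder K] [IsStrictOrderedRing K] {S I C : K}

theorem cooperation_le_interference (hI : 0 ≤ I) (hIS : I ≤ S)
    (hCb : C ≤ I * (1 + I) / (1 + S)) : C ≤ I := by
  have hS : 0 ≤ S := hI.trans hIS
  calc C ≤ I * (1 + I) / (1 + S) := hCb
    _ ≤ I * (1 + S) / (1 + S) := by gcongr
    _ = I := mul_div_cancel_right₀ I (by positivity)

theorem direct_mul_cooperation_le (hS : 0 ≤ S) (hI : 0 ≤ I) (hC : 0 ≤ C)
    (hCb : C ≤ I * (1 + I) / (1 + S)) : S * C ≤ I * (1 + C + I) := by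
  have hweak : C * (1 + S) ≤ I * (1 + I) := (le_div_iff₀ (by positivity)).1 hCb
  have hIC : 0 ≤ I * C := mul_nonneg hI hC
  linarith

theorem mul_one_add_div_le_div_add (hS : 0 ≤ S) (hI : 0 ≤ I) (hC : 0 ≤ C)
    (hSC : S * C ≤ I * (1 + C + I)) :
    S * (1 + C) / (1 + C + I) ≤ S / (1 + I) + I := by
  have hdirect : S / (1 + C + I) ≤ S / (1 + I) := by
    gcongr
    exact le_add_of_nonneg_right hC
  have hcoop : S * C / (1 + C + I) ≤ I := (div_le_iff₀ (by positivity)).2 hSC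
  calc S * (1 + C) / (1 + C + I) = S / (1 + C + I) + S * C / (1 + C + I) := by ring
    _ ≤ S / (1 + I) + I := add_le_add hdirect hcoop

theorem add_add_div_le_two_mul (hS : 0 ≤ S) (hI : 0 ≤ I) (hCI : C ≤ I) :
    1 + C + I + S / (1 + I) ≤ 2 * (1 + I + S / (1 + I)) := by
  have hdiv : 0 ≤ S / (1 + I) := by positivity
  linarith

theorem add_mul_one_add_div_le_two_mul (hS : 0 ≤ S) (hI : 0 ≤ I) (hC : 0 ≤ C)
    (hSC : S * C ≤ I * (1 + C + I)) :
    1 + I + S * (1 + C) / (1 + C + I) ≤ 2 * (1 + I + S / (1 + I)) := by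
  have hdiv : 0 ≤ S / (1 + I) := by positivity
  linarith [mul_one_add_div_le_div_add hS hI hC hSC]

end Gains

theorem logb_le_logb_add_one {b x y : ℝ} (hb : 1 < b) (hx : 0 < x) (hxy : x ≤ b * y) :
    Real.logb b x ≤ Real.logb b y + 1 := by
  have hb₀ : 0 < b := one_pos.trans hb
  have hy : 0 < y := pos_of_mul_pos_right (hx.trans_le hxy) hb₀.le
  calc Real.logb b x ≤ Real.logb b (b * y) := Real.logb_le_logb_of_le hb hx hxy
    _ = Real.logb b b + Real.logb b y := Real.logb_mul hb₀.ne' hy.ne'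
    _ = Real.logb b y + 1 := by rw [Real.logb_self_eq_one hb, add_comm]

theorem stmt_8 (S I C : ℝ) (hS : 0 ≤ S) (hI : 0 ≤ I) (hC : 0 ≤ C)
    (hIS : I ≤ S) (hCb : C ≤ I * (1 + I) / (1 + S)) :
    Real.logb 2 (1 + C + I + S / (1 + I)) + Real.logb 2 (1 + I + S * (1 + C) / (1 + C + I))
      ≤ 2 * Real.logb 2 (1 + I + S / (1 + I)) + 2 := by
  have hCI : C ≤ I := cooperation_le_interference hI hIS hCb
  have hSC : S * C ≤ I * (1 + C + I) := direct_mul_cooperation_le hS hI hC hCb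
  have hfirst : Real.logb 2 (1 + C + I + S / (1 + I))
      ≤ Real.logb 2 (1 + I + S / (1 + I)) + 1 :=
    logb_le_logb_add_one one_lt_two (by positivity) (add_add_div_le_two_mul hS hI hCI)
  have hsecond : Real.logb 2 (1 + I + S * (1 + C) / (1 + C + I))
      ≤ Real.logb 2 (1 + I + S / (1 + I)) + 1 :=
    logb_le_logb_add_one one_lt_two (by positivity)
      (add_mul_one_add_div_le_two_mul hS hI hC hSC)
  linarith
end

section
/- For all nonnegative real numbers S, I, C with I ≤ S and C ≤ I(1+I)/(1+S), one has log₂(1 + C/(1+I+S)) + log₂(1 + I + S(1+C)/(1+I+C)) ≤ log₂(1 + I + S/(1+I)) + 2. -/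
/-! Each of the two logarithms on the left costs at most one bit. In the first, `C` is at most
`1 + I + S`, so the argument is at most `2`. In the second, cooperation increases the
non-cooperative term `S / (1 + I)` by exactly `S * I * C / ((1 + I) * (1 + I + C))`. As long as this
excess is at most `I`, the argument is at most twice its non-cooperative value. -/

section CooperativeExcess

variable {K : Type*} [Field K] {S I C : K}

theorem mul_one_add_div_one_add_add (hI : 1 + I ≠ 0) (hIC : 1 + I + C ≠ 0) :
    S * (1 + C) / (1 + I + C) = S / (1 + I) + S * I * C / ((1 + I) * (1 + I + C)) := by
  field_simp
  ring

theorem mul_one_add_div_one_add_add_le [LinearOrder K] [IsStrictOrderedRing K]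
    (hI : 0 ≤ I) (hIC : 0 < 1 + I + C) (hSC : S * C ≤ (1 + I) * (1 + I + C)) :
    S * (1 + C) / (1 + I + C) ≤ S / (1 + I) + I := by
  have hI₁ : 0 < 1 + I := by positivity
  rw [mul_one_add_div_one_add_add hI₁.ne' hIC.ne']
  gcongr
  rw [div_le_iff₀ (mul_pos hI₁ hIC)]
  calc
    S * I * C = I * (S * C) := by ring
    _ ≤ I * ((1 + I) * (1 + I + C)) := by gcongr

end CooperativeExcess

theorem logb_two_one_add_le_one {x : ℝ} (hx : -1 < x) (hx₁ : x ≤ 1) :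
    Real.logb 2 (1 + x) ≤ 1 := by
  simpa only [Real.logb_one, zero_add] using
    logb_le_logb_add_one (y := 1) one_lt_two (by linarith : 0 < 1 + x) (by linarith)

theorem logb_two_cooperative_le_add_one {S I C : ℝ} (hS : 0 ≤ S) (hI : 0 ≤ I) (hC : 0 ≤ C)
    (hSC : S * C ≤ (1 + I) * (1 + I + C)) :
    Real.logb 2 (1 + I + S * (1 + C) / (1 + I + C)) ≤ Real.logb 2 (1 + I + S / (1 + I)) + 1 := by
  apply logb_le_logb_add_one one_lt_two (by positivity)
  have h_excess := mul_one_add_div_one_add_add_le hI (by positivity) hSC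
  have h_noncoop : 0 ≤ S / (1 + I) := by positivity
  linarith

theorem stmt_9_general {S I C : ℝ} (hS : 0 ≤ S) (hI : 0 ≤ I) (hC : 0 ≤ C)
    (hCIS : C ≤ 1 + I + S) (hSC : S * C ≤ (1 + I) * (1 + I + C)) :
    Real.logb 2 (1 + C / (1 + I + S)) + Real.logb 2 (1 + I + S * (1 + C) / (1 + I + C))
      ≤ Real.logb 2 (1 + I + S / (1 + I)) + 2 := by
  have h_ratio : 0 ≤ C / (1 + I + S) := by positivity
  have h_first : Real.logb 2 (1 + C / (1 + I + S)) ≤ 1 :=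
    logb_two_one_add_le_one (by linarith) (div_le_one_of_le₀ hCIS (by positivity))
  have h_second := logb_two_cooperative_le_add_one hS hI hC hSC
  linarith

theorem stmt_9 (S I C : ℝ) (hS : 0 ≤ S) (hI : 0 ≤ I) (hC : 0 ≤ C)
    (hIS : I ≤ S) (hCb : C ≤ I * (1 + I) / (1 + S)) :
    Real.logb 2 (1 + C / (1 + I + S)) + Real.logb 2 (1 + I + S * (1 + C) / (1 + I + C))
      ≤ Real.logb 2 (1 + I + S / (1 + I)) + 2 := by
  have hCS : C * (1 + S) ≤ I * (1 + I) := (le_div_iff₀ (by positivity)).1 hCb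
  have hCI : C ≤ I := hCb.trans <| (div_le_iff₀ (by positivity)).2 <| by gcongr
  have hSC : S * C ≤ (1 + I) * (1 + I + C) := calc
    S * C ≤ C * (1 + S) := by linarith
    _ ≤ (1 + I) * I := by linarith
    _ ≤ (1 + I) * (1 + I + C) := by gcongr; linarith
  exact stmt_9_general hS hI hC (by linarith) hSC
end

section
/- For all nonnegative real numbers S, I, C with I ≤ S and I(1+I)/(1+S) ≤ C ≤ max{I, S/(1+I)}, one has log₂(1 + I + S(1+C)/(1+I+C)) ≤ log₂(1 + S/(1+I)) + log₂(1 + min{I, C}) + 2. -/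
/-!
Write `m = min I C`, `A = 1 + S / (1 + I)` and `B = 1 + m`. The argument of the logarithm on the
left is a sum of two terms, each at most `A * B`, so the gap is at most one bit.

* Since `max I C ≤ I + C`, we have `(1 + I) * (1 + C) ≤ (1 + m) * (1 + I + C)`, which bounds
  `S * (1 + C) / (1 + I + C)` by `S / (1 + I) * B`.
* The bound `1 + I ≤ A * B` says `(1 + I) ^ 2 ≤ (1 + I + S) * (1 + m)`. This is clear if `m = I`;
  if `m = C`, expand and use `I * (1 + I) ≤ C * (1 + S)`.
-/

section OrderedRing

variable {R : Type*} [CommRing R] [LinearOrder R] [IsStrictOrderedRing R] {a b s : R}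

theorem one_add_mul_one_add_le_one_add_min_mul (ha : 0 ≤ a) (hb : 0 ≤ b) :
    (1 + a) * (1 + b) ≤ (1 + min a b) * (1 + a + b) := by
  calc (1 + a) * (1 + b) = (1 + min a b) * (1 + max a b) := by
        linear_combination -(min_add_max a b) - min_mul_max a b
    _ ≤ (1 + min a b) * (1 + (a + b)) := by
        gcongr
        exact max_le_add_of_nonneg ha hb
    _ = (1 + min a b) * (1 + a + b) := by rw [add_assoc]

theorem one_add_sq_le_mul_one_add_min (ha : 0 ≤ a) (hb : 0 ≤ b) (hs : 0 ≤ s)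
    (h : a * (1 + a) ≤ b * (1 + s)) :
    (1 + a) ^ 2 ≤ (1 + a + s) * (1 + min a b) := by
  rcases le_total a b with hab | hba
  · rw [min_eq_left hab]
    linear_combination mul_nonneg hs (add_nonneg zero_le_one ha)
  · rw [min_eq_right hba]
    linear_combination h + hs + mul_nonneg ha hb

end OrderedRing

section OrderedField

variable {K : Type*} [Field K] [LinearOrder K] [IsStrictOrderedRing K] {a b s : K}

theorem mul_one_add_div_le_div_mul_one_add_min (ha : 0 ≤ a) (hb : 0 ≤ b) (hs : 0 ≤ s) :
    s * (1 + b) / (1 + a + b) ≤ s / (1 + a) * (1 + min a b) := by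
  rw [div_mul_eq_mul_div, div_le_div_iff₀ (by positivity) (by positivity)]
  linear_combination s * one_add_mul_one_add_le_one_add_min_mul ha hb

theorem one_add_le_one_add_div_mul_one_add_min (ha : 0 ≤ a) (hb : 0 ≤ b) (hs : 0 ≤ s)
    (h : a * (1 + a) / (1 + s) ≤ b) :
    1 + a ≤ (1 + s / (1 + a)) * (1 + min a b) := by
  have ha₁ : 0 < 1 + a := by positivity
  rw [one_add_div ha₁.ne', div_mul_eq_mul_div, le_div_iff₀ ha₁, ← sq]
  exact one_add_sq_le_mul_one_add_min ha hb hs ((div_le_iff₀ (by positivity)).1 h)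

end OrderedField

theorem stmt_11_general {S I C : ℝ} (hS : 0 ≤ S) (hI : 0 ≤ I)
    (hClo : I * (1 + I) / (1 + S) ≤ C) :
    Real.logb 2 (1 + I + S * (1 + C) / (1 + I + C))
      ≤ Real.logb 2 (1 + S / (1 + I)) + Real.logb 2 (1 + min I C) + 1 := by
  have hC : 0 ≤ C := le_trans (by positivity) hClo
  have hA : 0 < 1 + S / (1 + I) := by positivity
  have hB : 0 < 1 + min I C := by positivity
  have hdouble : 1 + I + S * (1 + C) / (1 + I + C)
      ≤ (1 + S / (1 + I)) * (1 + min I C) * 2 := by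
    linear_combination one_add_le_one_add_div_mul_one_add_min hI hC hS hClo
      + mul_one_add_div_le_div_mul_one_add_min hI hC hS + hB
  calc Real.logb 2 (1 + I + S * (1 + C) / (1 + I + C))
      ≤ Real.logb 2 ((1 + S / (1 + I)) * (1 + min I C) * 2) :=
        Real.logb_le_logb_of_le one_lt_two (by positivity) hdouble
    _ = Real.logb 2 (1 + S / (1 + I)) + Real.logb 2 (1 + min I C) + 1 := by
        rw [Real.logb_mul (mul_pos hA hB).ne' two_ne_zero, Real.logb_mul hA.ne' hB.ne',
          Real.logb_self_eq_one one_lt_two]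

theorem stmt_11 (S I C : ℝ) (hS : 0 ≤ S) (hI : 0 ≤ I) (hC : 0 ≤ C)
    (hIS : I ≤ S) (hClo : I * (1 + I) / (1 + S) ≤ C) (hChi : C ≤ max I (S / (1 + I))) :
    Real.logb 2 (1 + I + S * (1 + C) / (1 + I + C))
      ≤ Real.logb 2 (1 + S / (1 + I)) + Real.logb 2 (1 + min I C) + 2 :=
  (stmt_11_general hS hI hClo).trans (by gcongr; exact one_le_two)
end

section
/- For all nonnegative real numbers S, I, C with I ≤ S and I(1+I)/(1+S) ≤ C ≤ max{I, S/(1+I)}, one has log₂(1 + S + I) + log₂(1 + I + S(1+C)/(1+C+I)) ≤ log₂(1 + S/(1+I)) + log₂(1 + I + S/(1 + min{I,C})) + 2·log₂(1 + min{I,C}) + 3. -/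
/-!
Write `m = min I C`. Clearing the inner fractions turns the inequality, with `1` in place of `3`,
into `(1 + I) (1 + I + S (1 + C) / (1 + C + I)) ≤ 2 (1 + m) ((1 + I) (1 + m) + S)`.
Each of the two terms on the left is at most half of the right-hand side: the term with `S` because
`(1 + I) (1 + C) / (1 + C + I) ≤ 1 + m`, and `(1 + I) ^ 2` trivially when `m = I` and by the lower
bound on `C` when `m = C`. The factor `2` costs one bit.
-/

section OrderedRing

variable {R : Type*} [CommRing R] [LinearOrder R] [IsStrictOrderedRing R] {S I C : R}

lemma one_add_mul_one_add_le_one_add_min_mul_s12 (hI : 0 ≤ I) (hC : 0 ≤ C) :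
    (1 + I) * (1 + C) ≤ (1 + min I C) * (1 + C + I) := by
  rcases min_choice I C with hmin | hmin <;> rw [hmin]
  · exact mul_le_mul_of_nonneg_left (by linarith) (by positivity)
  · rw [mul_comm (1 + I)]
    exact mul_le_mul_of_nonneg_left (by linarith) (by positivity)

lemma one_add_sq_le_one_add_min_mul (hS : 0 ≤ S) (hI : 0 ≤ I) (hC : 0 ≤ C)
    (hIC : I * (1 + I) ≤ C * (1 + S)) :
    (1 + I) ^ 2 ≤ (1 + min I C) * ((1 + I) * (1 + min I C) + S) := by
  rcases min_choice I C with hmin | hmin <;> rw [hmin]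
  · have hpow : (1 + I) ^ 2 ≤ (1 + I) ^ 3 := pow_le_pow_right₀ (by linarith) (by norm_num)
    have hrest : 0 ≤ (1 + I) * S := by positivity
    linear_combination hpow + hrest
  · have hrest : 0 ≤ S + C + 2 * I * C + (1 + I) * C ^ 2 := by positivity
    linear_combination hIC + hrest

end OrderedRing

lemma one_add_mul_add_div_le_two_mul {K : Type*} [Field K] [LinearOrder K] [IsStrictOrderedRing K]
    {S I C : K} (hS : 0 ≤ S) (hI : 0 ≤ I) (hC : 0 ≤ C) (hIC : I * (1 + I) ≤ C * (1 + S)) :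
    (1 + I) * (1 + I + S * (1 + C) / (1 + C + I))
      ≤ 2 * ((1 + min I C) * ((1 + I) * (1 + min I C) + S)) := by
  have hdiv : (1 + I) * (1 + C) / (1 + C + I) ≤ 1 + min I C :=
    (div_le_iff₀ (by positivity)).2 (one_add_mul_one_add_le_one_add_min_mul_s12 hI hC)
  have hrest : 0 ≤ (1 + min I C) * ((1 + I) * (1 + min I C)) := by positivity
  calc (1 + I) * (1 + I + S * (1 + C) / (1 + C + I))
      = (1 + I) ^ 2 + (1 + I) * (1 + C) / (1 + C + I) * S := by ring
    _ ≤ (1 + min I C) * ((1 + I) * (1 + min I C) + S) + (1 + min I C) * S := by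
        gcongr
        exact one_add_sq_le_one_add_min_mul hS hI hC hIC
    _ ≤ 2 * ((1 + min I C) * ((1 + I) * (1 + min I C) + S)) := by linarith

lemma logb_add_div_eq_sub {b x y z : ℝ} (hz : z ≠ 0) (hxyz : x * z + y ≠ 0) :
    Real.logb b (x + y / z) = Real.logb b (x * z + y) - Real.logb b z := by
  rw [add_div' _ _ _ hz, Real.logb_div hxyz hz]

theorem stmt_12_general {S I C : ℝ} (hS : 0 ≤ S) (hI : 0 ≤ I)
    (hClo : I * (1 + I) / (1 + S) ≤ C) :
    Real.logb 2 (1 + S + I) + Real.logb 2 (1 + I + S * (1 + C) / (1 + C + I))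
      ≤ Real.logb 2 (1 + S / (1 + I)) + Real.logb 2 (1 + I + S / (1 + min I C))
        + 2 * Real.logb 2 (1 + min I C) + 1 := by
  have hC : 0 ≤ C := le_trans (by positivity) hClo
  have hprod := one_add_mul_add_div_le_two_mul hS hI hC ((div_le_iff₀ (by positivity)).1 hClo)
  have hlog := Real.logb_le_logb_of_le one_lt_two (by positivity) hprod
  rw [Real.logb_mul (by positivity) (by positivity), Real.logb_mul (by positivity) (by positivity),
    Real.logb_mul (by positivity) (by positivity), Real.logb_self_eq_one one_lt_two] at hlog
  have hdirect : Real.logb 2 (1 + S / (1 + I))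
      = Real.logb 2 (1 + S + I) - Real.logb 2 (1 + I) := by
    rw [logb_add_div_eq_sub (by positivity) (by positivity), one_mul, add_right_comm]
  have hprivate : Real.logb 2 (1 + I + S / (1 + min I C))
      = Real.logb 2 ((1 + I) * (1 + min I C) + S) - Real.logb 2 (1 + min I C) :=
    logb_add_div_eq_sub (by positivity) (by positivity)
  linarith

theorem stmt_12 (S I C : ℝ) (hS : 0 ≤ S) (hI : 0 ≤ I) (hC : 0 ≤ C)
    (hIS : I ≤ S) (hClo : I * (1 + I) / (1 + S) ≤ C) (hChi : C ≤ max I (S / (1 + I))) :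
    Real.logb 2 (1 + S + I) + Real.logb 2 (1 + I + S * (1 + C) / (1 + C + I))
      ≤ Real.logb 2 (1 + S / (1 + I)) + Real.logb 2 (1 + I + S / (1 + min I C))
        + 2 * Real.logb 2 (1 + min I C) + 3 :=
  (stmt_12_general hS hI hClo).trans (by linarith)
end

section
/- For all nonnegative real numbers S, I, C with C ≥ S/(1+I), one has log₂(1 + S/(1+I)) ≤ log₂(1 + C/(1+I)) + log₂(1 + S/(1+C)) + 1; equivalently, 1 + S/(1+I) ≤ 2(1 + C/(1+I))(1 + S/(1+C)). -/
/-!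
Expanding the product `(1 + C / (1 + I)) * (1 + S / (1 + C))`, the terms containing `S` sum to
`S / (1 + I)` multiplied by `(1 + C + I) / (1 + C) ≥ 1`. So the product is at least
`1 + (C + S) / (1 + I)`, which bounds the gain with no constant loss.
-/

section Gains

variable {K : Type*} [Field K] [LinearOrder K] [IsStrictOrderedRing K] {S I C : K}

theorem div_one_add_le_one_add_div_mul_div (hS : 0 ≤ S) (hI : 0 ≤ I) (hC : -1 < C) :
    S / (1 + I) ≤ (1 + C / (1 + I)) * (S / (1 + C)) := by
  have hC' : 0 < 1 + C := neg_lt_iff_pos_add'.mp hC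
  have one_le_ratio : 1 ≤ (1 + C + I) / (1 + C) :=
    (one_le_div hC').mpr (le_add_of_nonneg_right hI)
  calc
    S / (1 + I) ≤ S / (1 + I) * ((1 + C + I) / (1 + C)) :=
      le_mul_of_one_le_right (by positivity) one_le_ratio
    _ = (1 + C / (1 + I)) * (S / (1 + C)) := by
      field_simp
      ring

theorem one_add_add_div_le_one_add_div_mul_one_add_div (hS : 0 ≤ S) (hI : 0 ≤ I) (hC : -1 < C) :
    1 + (C + S) / (1 + I) ≤ (1 + C / (1 + I)) * (1 + S / (1 + C)) :=
  calc
    1 + (C + S) / (1 + I) = (1 + C / (1 + I)) + S / (1 + I) := by ring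
    _ ≤ (1 + C / (1 + I)) + (1 + C / (1 + I)) * (S / (1 + C)) := by
      gcongr
      exact div_one_add_le_one_add_div_mul_div hS hI hC
    _ = (1 + C / (1 + I)) * (1 + S / (1 + C)) := by ring

end Gains

theorem logb_le_logb_add_logb_of_le_mul {b x y z : ℝ} (hb : 1 < b) (hx : 0 < x)
    (h : x ≤ y * z) : Real.logb b x ≤ Real.logb b y + Real.logb b z := by
  have hyz : y * z ≠ 0 := (hx.trans_le h).ne'
  rw [← Real.logb_mul (left_ne_zero_of_mul hyz) (right_ne_zero_of_mul hyz)]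
  exact Real.logb_le_logb_of_le hb hx h

theorem stmt_15_general {b S I C : ℝ} (hb : 1 < b) (hS : 0 ≤ S) (hI : 0 ≤ I) (hC : 0 ≤ C) :
    (Real.logb b (1 + S / (1 + I))
      ≤ Real.logb b (1 + C / (1 + I)) + Real.logb b (1 + S / (1 + C))) ∧
    1 + S / (1 + I) ≤ (1 + C / (1 + I)) * (1 + S / (1 + C)) := by
  have gain_le : 1 + S / (1 + I) ≤ (1 + C / (1 + I)) * (1 + S / (1 + C)) :=
    calc
      1 + S / (1 + I) ≤ 1 + (C + S) / (1 + I) := by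
        gcongr
        exact le_add_of_nonneg_left hC
      _ ≤ (1 + C / (1 + I)) * (1 + S / (1 + C)) :=
        one_add_add_div_le_one_add_div_mul_one_add_div hS hI (neg_one_lt_zero.trans_le hC)
  exact ⟨logb_le_logb_add_logb_of_le_mul hb (by positivity) gain_le, gain_le⟩

theorem stmt_15 (S I C : ℝ) (hS : 0 ≤ S) (hI : 0 ≤ I) (hC : 0 ≤ C)
    (hCb : C ≥ S / (1 + I)) :
    (Real.logb 2 (1 + S / (1 + I))
      ≤ Real.logb 2 (1 + C / (1 + I)) + Real.logb 2 (1 + S / (1 + C)) + 1) ∧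
    1 + S / (1 + I) ≤ 2 * ((1 + C / (1 + I)) * (1 + S / (1 + C))) := by
  obtain ⟨rate_le, gain_le⟩ := stmt_15_general one_lt_two hS hI hC
  exact ⟨rate_le.trans (by simp), gain_le.trans (le_mul_of_one_le_left (by positivity) one_le_two)⟩
end

section
/- For all nonnegative real numbers S and I, one has log₂(1 + S(1+I)/(1+2I)) ≥ log₂(1 + S) − 1; equivalently, 2(1 + S(1+I)/(1+2I)) ≥ 1 + S. -/
theorem logb_sub_one_le_logb_iff {b x y : ℝ} (hb : 1 < b) (hx : 0 < x) (hy : 0 < y) :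
    Real.logb b x - 1 ≤ Real.logb b y ↔ x ≤ b * y := by
  have hb₀ : 0 < b := zero_lt_one.trans hb
  rw [← Real.logb_self_eq_one hb, ← Real.logb_div hx.ne' hb₀.ne',
    Real.logb_le_logb hb (div_pos hx hb₀) hy, div_le_iff₀' hb₀]

theorem two_mul_one_add_mul_one_add_div {K : Type*} [Field K] (s : K) {t : K}
    (ht : 1 + 2 * t ≠ 0) :
    2 * (1 + s * (1 + t) / (1 + 2 * t)) = (1 + s) + (1 + s / (1 + 2 * t)) := by
  field_simp
  ring

theorem stmt_19 (S I : ℝ) (hS : 0 ≤ S) (hI : 0 ≤ I) :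
    Real.logb 2 (1 + S * (1 + I) / (1 + 2 * I)) ≥ Real.logb 2 (1 + S) - 1 ∧
    2 * (1 + S * (1 + I) / (1 + 2 * I)) ≥ 1 + S := by
  have gap : 1 + S ≤ 2 * (1 + S * (1 + I) / (1 + 2 * I)) := by
    rw [two_mul_one_add_mul_one_add_div S (by positivity)]
    exact le_add_of_nonneg_right (by positivity)
  exact ⟨(logb_sub_one_le_logb_iff one_lt_two (by positivity) (by positivity)).mpr gap, gap⟩
end
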